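/- arXiv:2111.10323 — 3 statements merged into one kernel-verified Lean document; each statement's English description precedes it below -/
import Mathlib

section
/- Let $p \in (0,1)$, $q = 1-p$, $0 < d \le 1 \le u$ with $u \ne d$, and set $\tilde{k}_0(n,u,d) = \lfloor n \ln(1/d)/\ln(u/d) \rfloor$. Then $B(n,u,d,p) = 2 \sum_{k=\tilde{k}_0(n,u,d)+1}^{n} \binom{n}{k} p^k q^{n-k}$ converges, as $n \to \infty$, to $0$ if $u^p d^q < 1$, to $1$ if $u^p d^q = 1$, and to $2$ if $u^p d^q > 1$. -/
open Filter

/-- Threshold separating losing from winning numbers of heads. -/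
noncomputable def ktilde (n : ℕ) (u d : ℝ) : ℕ :=
  ⌊(n : ℝ) * Real.log (1/d) / Real.log (u/d)⌋₊

/-- Twice the probability that a Binomial(n,p) random variable exceeds the threshold. -/
noncomputable def B (n : ℕ) (u d p : ℝ) : ℝ :=
  2 * ∑ k ∈ Finset.Icc (ktilde n u d + 1) n, (n.choose k : ℝ) * p^k * (1 - p)^(n-k)

/-!
Let `S n` be the sum of `n` independent Bernoulli variables of mean `p` and let
`c = log (1 / d) / log (u / d)`. For `0 ≤ c` one has `B n u d p = 2 * P (n * c < S n)`, and
`u ^ p * d ^ (1 - p) = (u / d) ^ (p - c)`, so that the three cases are `p < c`, `p = c` and `c < p`.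
When `c ≠ p` the law of large numbers makes the probability tend to `0` or `1`; when `c = p` the
central limit theorem makes it tend to the mass `1 / 2` that a centred Gaussian gives to the
positive half-line.
-/

open MeasureTheory ProbabilityTheory Set unitInterval
open scoped Topology

section LimitTheorems

lemma tendsto_measureReal_preimage_of_tendstoInDistribution {ι E Ω' : Type*} {Ω : ι → Type*}
    {mΩ : ∀ i, MeasurableSpace (Ω i)} {P : ∀ i, Measure (Ω i)} [∀ i, IsProbabilityMeasure (P i)]
    {mΩ' : MeasurableSpace Ω'} {P' : Measure Ω'} [IsProbabilityMeasure P']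
    [TopologicalSpace E] [HasOuterApproxClosed E] [MeasurableSpace E] [BorelSpace E]
    {l : Filter ι} {X : ∀ i, Ω i → E} {Y : Ω' → E} (hXY : TendstoInDistribution X l Y P P')
    {s : Set E} (hs : MeasurableSet s) (hYs : P' (Y ⁻¹' frontier s) = 0) :
    Tendsto (fun i ↦ (P i).real (X i ⁻¹' s)) l (𝓝 (P'.real (Y ⁻¹' s))) := by
  have hnull : P'.map Y (frontier s) = 0 := by
    rwa [Measure.map_apply_of_aemeasurable hXY.aemeasurable_limit
      isClosed_frontier.measurableSet]
  have := Measure.isProbabilityMeasure_map (μ := P') hXY.aemeasurable_limit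
  have hlim := (ENNReal.tendsto_toReal (measure_ne_top (P'.map Y) s)).comp
    (ProbabilityMeasure.tendsto_measure_of_null_frontier_of_tendsto' hXY.tendsto hnull)
  simpa only [Function.comp_def, ProbabilityMeasure.coe_mk, measureReal_def,
    Measure.map_apply_of_aemeasurable hXY.aemeasurable_limit hs,
    Measure.map_apply_of_aemeasurable (hXY.forall_aemeasurable _) hs] using hlim

lemma gaussianReal_real_Ioi_mean (m : ℝ) {v : NNReal} (hv : v ≠ 0) :
    (gaussianReal m v).real (Ioi m) = 1 / 2 := by
  have := nullSingletonClass_gaussianReal (μ := m) hv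
  have hreflect : (gaussianReal m v).map (2 * m - ·) = gaussianReal m v := by
    rw [gaussianReal_map_const_sub, two_mul, add_sub_cancel_right]
  have hIoi_Iio : (gaussianReal m v).real (Ioi m) = (gaussianReal m v).real (Iio m) := by
    conv_lhs => rw [← hreflect, map_measureReal_apply (by fun_prop) measurableSet_Ioi]
    congr 1
    ext x
    simp only [mem_preimage, mem_Ioi, mem_Iio]
    constructor <;> intro _ <;> linarith
  have hIio_Iic := measureReal_congr (Iio_ae_eq_Iic (μ := gaussianReal m v) (a := m))
  have hcompl := probReal_compl_eq_one_sub (μ := gaussianReal m v) (measurableSet_Ioi (a := m))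
  rw [compl_Ioi] at hcompl
  linarith

variable {Ω : Type*} {mΩ : MeasurableSpace Ω} {P : Measure Ω} [IsProbabilityMeasure P]
  {X : ℕ → Ω → ℝ}

lemma tendsto_measureReal_lt_sum_of_ne_mean {c : ℝ} (hc : c ≠ P[X 0])
    (hint : Integrable (X 0) P) (hindep : iIndepFun X P)
    (hident : ∀ i, IdentDistrib (X i) (X 0) P P) :
    Tendsto (fun n : ℕ ↦ P.real {ω | n * c < ∑ i ∈ Finset.range n, X i ω}) atTop
      (𝓝 (if c < P[X 0] then 1 else 0)) := by
  have hmeas (i : ℕ) : AEMeasurable (X i) P := (hident i).aemeasurable_fst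
  have hlaw : TendstoInDistribution (fun (n : ℕ) ω ↦ (∑ i ∈ Finset.range n, X i ω) / n) atTop
      (fun _ ↦ P[X 0]) (fun _ ↦ P) P :=
    tendstoInDistribution_of_ae_tendsto (fun n ↦ by fun_prop) (by fun_prop)
      (strong_law_ae_real X hint (fun i j hij ↦ hindep.indepFun hij) hident)
  have hlim := tendsto_measureReal_preimage_of_tendstoInDistribution hlaw
    (measurableSet_Ioi (a := c)) (by simp [hc.symm])
  have hvalue : P.real ((fun _ ↦ P[X 0]) ⁻¹' Ioi c) = if c < P[X 0] then 1 else 0 := by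
    split_ifs with h <;> simp [h]
  rw [hvalue] at hlim
  refine hlim.congr' ?_
  filter_upwards [eventually_gt_atTop 0] with n hn
  congr 1
  ext ω
  simp only [mem_preimage, mem_Ioi, mem_ofPred_eq, lt_div_iff₀' (Nat.cast_pos.2 hn : (0 : ℝ) < n)]

lemma tendsto_measureReal_mean_lt_sum (hvar : Var[X 0; P] ≠ 0) (hindep : iIndepFun X P)
    (hident : ∀ i, IdentDistrib (X i) (X 0) P P) :
    Tendsto (fun n : ℕ ↦ P.real {ω | n * P[X 0] < ∑ i ∈ Finset.range n, X i ω}) atTop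
      (𝓝 (1 / 2)) := by
  have hX : MemLp (X 0) 2 P :=
    memLp_two_of_variance_ne_zero (hident 0).aemeasurable_fst.aestronglyMeasurable hvar
  set v := Var[X 0; P].toNNReal
  have hv : v ≠ 0 :=
    (Real.toNNReal_pos.2 ((variance_nonneg _ _).lt_of_ne hvar.symm)).ne'
  have := nullSingletonClass_gaussianReal (μ := 0) hv
  have hclt := tendstoInDistribution_inv_sqrt_mul_sum_sub
    (HasLaw.id (μ := gaussianReal 0 v)) hX hindep hident
  have hlim := tendsto_measureReal_preimage_of_tendstoInDistribution hclt
    (measurableSet_Ioi (a := 0)) (by simp)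
  rw [preimage_id, gaussianReal_real_Ioi_mean 0 hv] at hlim
  refine hlim.congr' ?_
  filter_upwards [eventually_gt_atTop 0] with n hn
  congr 1
  ext ω
  have hsqrt : 0 < (√(n : ℝ))⁻¹ := by positivity
  simp only [mem_preimage, mem_Ioi, mem_ofPred_eq, mul_pos_iff_of_pos_left hsqrt, sub_pos]

end LimitTheorems

section Binomial

variable {p : I} {Ω : Type*} {mΩ : MeasurableSpace Ω} {P : Measure Ω}

lemma integral_of_hasLaw_bernoulliMeasure {x y : ℝ} {X : Ω → ℝ} (hX : HasLaw X Ber(x, y, p) P) :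
    P[X] = p * x + (1 - p) * y := by
  rw [hX.integral_eq, integral_bernoulliMeasure, smul_eq_mul, smul_eq_mul]

lemma variance_of_hasLaw_bernoulliMeasure {x y : ℝ} {X : Ω → ℝ} (hX : HasLaw X Ber(x, y, p) P) :
    Var[X; P] = p * (1 - p) * (x - y) ^ 2 := by
  have hL2 : MemLp id 2 Ber(x, y, p) :=
    (memLp_two_iff_integrable_sq (by fun_prop)).2 (integrable_bernoulliMeasure x y p _)
  rw [hX.variance_eq, variance_eq_sub hL2]
  simp only [integral_bernoulliMeasure, Pi.pow_apply, id_eq, smul_eq_mul]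
  ring

lemma charFun_bernoulliMeasure (x y t : ℝ) :
    charFun Ber(x, y, p) t =
      p * Complex.exp (t * x * Complex.I) + (1 - p) * Complex.exp (t * y * Complex.I) := by
  simp [charFun_apply_real, integral_bernoulliMeasure]

lemma charFun_map_cast_binomial (n : ℕ) (t : ℝ) :
    charFun Bin(ℝ, n, p) t = (p * Complex.exp (t * Complex.I) + (1 - p)) ^ n := by
  rw [charFun_apply_real, integral_map_cast_binomial, add_pow, Nat.range_succ_eq_Iic]
  refine Finset.sum_congr rfl fun k _ ↦ ?_
  rw [mul_pow, ← Complex.exp_nat_mul, Complex.real_smul]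
  push_cast
  ring_nf

lemma hasLaw_sum_binomial {X : ℕ → Ω → ℝ} (hindep : iIndepFun X P)
    (hlaw : ∀ i, HasLaw (X i) Ber((1 : ℝ), 0, p) P) (n : ℕ) :
    HasLaw (fun ω ↦ ∑ i ∈ Finset.range n, X i ω) Bin(ℝ, n, p) P := by
  have hmeas (i : ℕ) : AEMeasurable (X i) P := (hlaw i).aemeasurable
  have := (hlaw 0).isProbabilityMeasure
  refine ⟨by fun_prop, ?_⟩
  have := Measure.isProbabilityMeasure_map (μ := P)
    (f := fun ω ↦ ∑ i ∈ Finset.range n, X i ω) (by fun_prop)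
  refine Measure.ext_of_charFun (funext fun t ↦ ?_)
  rw [(hindep.restrict _).charFun_map_fun_finsetSum_eq_prod (fun i _ ↦ hmeas i),
    charFun_map_cast_binomial]
  simp [fun i ↦ (hlaw i).map_eq, charFun_bernoulliMeasure]

-- The maximum accounts for `⌊x⌋₊ = 0` when `x < 0`: the sum never includes `k = 0`.
lemma map_cast_binomial_real_Ioi_max_zero (n : ℕ) (x : ℝ) :
    Bin(ℝ, n, p).real (Ioi (max x 0)) =
      ∑ k ∈ Finset.Icc (⌊x⌋₊ + 1) n, (n.choose k : ℝ) * p ^ k * (1 - p) ^ (n - k) := by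
  have hIcc : Finset.Icc (⌊x⌋₊ + 1) n = {k ∈ Finset.Iic n | ((k : ℕ) : ℝ) ∈ Ioi (max x 0)} := by
    ext k
    have hfloor : ⌊x⌋₊ < k ↔ x < k ∧ 0 < k := by
      rcases k.eq_zero_or_pos with rfl | hk
      · simp
      · simp [Nat.floor_lt' hk.ne', hk]
    simp [hfloor, and_comm]
  rw [← integral_indicator_one measurableSet_Ioi, integral_map_cast_binomial, hIcc,
    Finset.sum_filter]
  exact Finset.sum_congr rfl fun k _ ↦ by simp [indicator_apply]

lemma tendsto_map_cast_binomial_real_Ioi_of_ne {c : ℝ} (hc : c ≠ p) :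
    Tendsto (fun n : ℕ ↦ Bin(ℝ, n, p).real (Ioi (n * c))) atTop
      (𝓝 (if c < p then 1 else 0)) := by
  obtain ⟨Ω, _, P, X, -, hlaw, hindep, _⟩ := exists_iid ℕ Ber((1 : ℝ), 0, p)
  have hident (i : ℕ) : IdentDistrib (X i) (X 0) P P := (hlaw i).identDistrib (hlaw 0)
  have hmean : ∫ ω, X 0 ω ∂P = p :=
    (integral_of_hasLaw_bernoulliMeasure (hlaw 0)).trans (by ring)
  have hint : Integrable (X 0) P :=
    ((hlaw 0).identDistrib .id).integrable_iff.2 (integrable_bernoulliMeasure 1 0 p id)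
  have hlln := tendsto_measureReal_lt_sum_of_ne_mean (hmean ▸ hc) hint hindep hident
  rw [hmean] at hlln
  exact hlln.congr fun n ↦ (hasLaw_sum_binomial hindep hlaw n).measureReal_eq measurableSet_Ioi

lemma tendsto_map_cast_binomial_real_Ioi_mean (hp0 : (0 : ℝ) < p) (hp1 : (p : ℝ) < 1) :
    Tendsto (fun n : ℕ ↦ Bin(ℝ, n, p).real (Ioi (n * p))) atTop (𝓝 (1 / 2)) := by
  obtain ⟨Ω, _, P, X, -, hlaw, hindep, _⟩ := exists_iid ℕ Ber((1 : ℝ), 0, p)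
  have hident (i : ℕ) : IdentDistrib (X i) (X 0) P P := (hlaw i).identDistrib (hlaw 0)
  have hmean : ∫ ω, X 0 ω ∂P = p :=
    (integral_of_hasLaw_bernoulliMeasure (hlaw 0)).trans (by ring)
  have hvar : Var[X 0; P] ≠ 0 := by
    rw [variance_of_hasLaw_bernoulliMeasure (hlaw 0), sub_zero, one_pow, mul_one]
    exact (mul_pos hp0 (sub_pos.2 hp1)).ne'
  have hclt := tendsto_measureReal_mean_lt_sum hvar hindep hident
  rw [hmean] at hclt
  exact hclt.congr fun n ↦ (hasLaw_sum_binomial hindep hlaw n).measureReal_eq measurableSet_Ioi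

end Binomial

/-- The fraction of heads at which a player, whose capital is multiplied by `u` on heads and by `d`
on tails, breaks even: the solution `x` of `u ^ x * d ^ (1 - x) = 1`. -/
noncomputable def breakEven (u d : ℝ) : ℝ := Real.log (1 / d) / Real.log (u / d)

lemma rpow_mul_rpow_one_sub_eq_rpow_sub_breakEven {u d : ℝ} (hu : 0 < u) (hd : 0 < d)
    (hne : u ≠ d) (p : ℝ) :
    u ^ p * d ^ (1 - p) = (u / d) ^ (p - breakEven u d) := by
  have hratio : 0 < u / d := div_pos hu hd
  have hlog : Real.log (u / d) ≠ 0 :=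
    Real.log_ne_zero_of_pos_of_ne_one hratio (by rwa [Ne, div_eq_one_iff_eq hd.ne'])
  have hbreakEven : (u / d) ^ breakEven u d = d⁻¹ := by
    rw [Real.rpow_def_of_pos hratio, breakEven, mul_div_cancel₀ _ hlog,
      Real.exp_log (by positivity), one_div]
  rw [Real.rpow_sub hratio, hbreakEven, Real.div_rpow hu.le hd.le, Real.rpow_sub hd, Real.rpow_one]
  field_simp

lemma B_eq_two_mul_binomial_real_Ioi (n : ℕ) (u d : ℝ) (p : I) :
    B n u d p = 2 * Bin(ℝ, n, p).real (Ioi (n * max (breakEven u d) 0)) := by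
  rw [mul_max_of_nonneg _ _ n.cast_nonneg, mul_zero, map_cast_binomial_real_Ioi_max_zero, B,
    ktilde, breakEven, mul_div_assoc]

theorem winning_prob_threshold_biased_general (u d p : ℝ) (hp0 : 0 < p) (hp1 : p < 1)
    (hd0 : 0 < d) (hdu : d < u) :
    (u ^ p * d ^ (1 - p) < 1 → Tendsto (fun n : ℕ => B n u d p) atTop (nhds 0)) ∧
    (u ^ p * d ^ (1 - p) = 1 → Tendsto (fun n : ℕ => B n u d p) atTop (nhds 1)) ∧
    (1 < u ^ p * d ^ (1 - p) → Tendsto (fun n : ℕ => B n u d p) atTop (nhds 2)) := by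
  lift p to I using ⟨hp0.le, hp1.le⟩
  have hratio : 1 < u / d := (one_lt_div hd0).2 hdu
  simp_rw [rpow_mul_rpow_one_sub_eq_rpow_sub_breakEven (hd0.trans hdu) hd0 hdu.ne',
    B_eq_two_mul_binomial_real_Ioi]
  refine ⟨fun hlt ↦ ?_, fun heq ↦ ?_, fun hgt ↦ ?_⟩
  · rw [← Real.rpow_zero (u / d), Real.rpow_lt_rpow_left_iff hratio, sub_neg] at hlt
    have hp : p < max (breakEven u d) 0 := lt_max_of_lt_left hlt
    simpa only [if_neg hp.not_gt, mul_zero] using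
      (tendsto_map_cast_binomial_real_Ioi_of_ne hp.ne').const_mul 2
  · rw [← Real.rpow_zero (u / d), Real.rpow_right_inj (one_pos.trans hratio) hratio.ne',
      sub_eq_zero] at heq
    have hp : max (breakEven u d) 0 = p := by rw [← heq, max_eq_left hp0.le]
    simpa only [hp, mul_one_div_cancel (two_ne_zero (α := ℝ))] using
      (tendsto_map_cast_binomial_real_Ioi_mean hp0 hp1).const_mul 2
  · rw [← Real.rpow_zero (u / d), Real.rpow_lt_rpow_left_iff hratio, sub_pos] at hgt
    have hp : max (breakEven u d) 0 < p := max_lt hgt hp0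
    simpa only [if_pos hp, mul_one] using
      (tendsto_map_cast_binomial_real_Ioi_of_ne hp.ne).const_mul 2

theorem winning_prob_threshold_biased (u d p : ℝ)
    (hp0 : 0 < p) (hp1 : p < 1)
    (hd0 : 0 < d) (hd1 : d ≤ 1) (hu : 1 ≤ u) (hne : u ≠ d) :
    (u ^ p * d ^ (1 - p) < 1 → Tendsto (fun n : ℕ => B n u d p) atTop (nhds 0)) ∧
    (u ^ p * d ^ (1 - p) = 1 → Tendsto (fun n : ℕ => B n u d p) atTop (nhds 1)) ∧
    (1 < u ^ p * d ^ (1 - p) → Tendsto (fun n : ℕ => B n u d p) atTop (nhds 2)) :=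
  winning_prob_threshold_biased_general u d p hp0 hp1 hd0 ((hd1.trans hu).lt_of_ne' hne)
end

section
/- Let $p \in (0,1)$, $q = 1-p$, $0 < d \le 1 \le u$ with $u \ne d$, $\tilde{k}_0(n,u,d) = \lfloor n \ln(1/d)/\ln(u/d) \rfloor$, and define the expected net profit $G(n,u,d,p) = -1 + \sum_{k=0}^{\tilde{k}_0(n,u,d)} \binom{n}{k} (pu)^k (qd)^{n-k} + 2 \sum_{k=\tilde{k}_0(n,u,d)+1}^{n} \binom{n}{k} p^k q^{n-k}$. Then as $n \to \infty$, $G(n,u,d,p)$ converges to $1$ if $u^p d^q > 1$, to $0$ if $u^p d^q = 1$, and to $-1$ if $u^p d^q < 1$. -/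
open Filter

/-- Expected net profit (for stake 1) after `n` rounds with heads probability `p`. -/
noncomputable def G (n : ℕ) (u d p : ℝ) : ℝ :=
  -1 + ∑ k ∈ Finset.range (ktilde n u d + 1), (n.choose k : ℝ) * (p * u)^k * ((1 - p) * d)^(n-k)
    + 2 * ∑ k ∈ Finset.Icc (ktilde n u d + 1) n, (n.choose k : ℝ) * p^k * (1 - p)^(n-k)

/-!
The logarithm of the score is a random walk with independent steps `log u` (with probability `p`)
and `log d` (with probability `1 - p`), of drift `log (u ^ p * d ^ (1 - p))`, and the net profit
is a function of its position: `exp s - 1` at `s ≤ 0` and `1` at `s > 0`. If the probability that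
the walk lies below a fixed level tends to the same limit `L` for every level, the mass escapes to
`±∞`, where the net profit is nearly `-1` and `1`, so its expectation tends to `-L + (1 - L)`. The
strong law of large numbers gives `L = 0` for positive and `L = 1` for negative drift, and for
zero drift the central limit theorem gives `L = 1 / 2`.
-/

open MeasureTheory ProbabilityTheory Real Topology unitInterval

section DistributionLimits

variable {Ω Ω' ι : Type*} {mΩ : MeasurableSpace Ω} {mΩ' : MeasurableSpace Ω'} {l : Filter ι}

lemma tendsto_measureReal_of_ae_eventually_mem_iff {P : Measure Ω} [IsFiniteMeasure P]
    [l.IsCountablyGenerated] {A : Set Ω} {As : ι → Set Ω} (hA : MeasurableSet A)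
    (hAs : ∀ i, MeasurableSet (As i)) (h : ∀ᵐ ω ∂P, ∀ᶠ i in l, ω ∈ As i ↔ ω ∈ A) :
    Tendsto (fun i ↦ P.real (As i)) l (𝓝 (P.real A)) :=
  (ENNReal.tendsto_toReal (measure_ne_top P A)).comp
    (tendsto_measure_of_ae_tendsto_indicator_of_isFiniteMeasure l hA hAs h)

lemma tendsto_measureReal_setOf_le_of_tendstoInDistribution {P : Measure Ω} {P' : Measure Ω'}
    [IsProbabilityMeasure P] [IsProbabilityMeasure P'] {S : ι → Ω → ℝ} {Z : Ω' → ℝ}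
    (h : TendstoInDistribution S l Z (fun _ ↦ P) P') {r : ℝ} (hr : P'.map Z {r} = 0) :
    Tendsto (fun i ↦ P.real {ω | S i ω ≤ r}) l (𝓝 ((P'.map Z).real (Set.Iic r))) := by
  have hlim := ProbabilityMeasure.tendsto_measure_of_null_frontier_of_tendsto' h.tendsto
    (E := Set.Iic r) (by rwa [frontier_Iic])
  refine ((ENNReal.tendsto_toReal (measure_ne_top (P'.map Z) _)).comp hlim).congr fun i ↦ ?_
  exact map_measureReal_apply_of_aemeasurable (h.forall_aemeasurable i) measurableSet_Iic

lemma measureReal_Iic_zero_of_isNegInvariant (μ : Measure ℝ) [IsProbabilityMeasure μ]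
    [NullSingletonClass μ] [μ.IsNegInvariant] : μ.real (Set.Iic 0) = 1 / 2 := by
  have hsymm : μ.real (Set.Iic 0) = μ.real (Set.Ioi 0) := by
    rw [measureReal_congr Ioi_ae_eq_Ici, measureReal_def, measureReal_def,
      ← μ.measure_neg, Set.neg_Iic, neg_zero]
  have hcompl := probReal_compl_eq_one_sub (μ := μ) (measurableSet_Iic (a := (0 : ℝ)))
  rw [Set.compl_Iic] at hcompl
  linarith

lemma gaussianReal_zero_real_Iic_zero {v : NNReal} (hv : v ≠ 0) :
    (gaussianReal 0 v).real (Set.Iic 0) = 1 / 2 := by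
  have : NullSingletonClass (gaussianReal 0 v) := nullSingletonClass_gaussianReal hv
  have : (gaussianReal 0 v).IsNegInvariant := ⟨gaussianReal_map_neg.trans (by rw [neg_zero])⟩
  exact measureReal_Iic_zero_of_isNegInvariant _

end DistributionLimits

section RandomWalk

variable {Ω : Type*} {mΩ : MeasurableSpace Ω} {P : Measure Ω} [IsProbabilityMeasure P]
  {X : ℕ → Ω → ℝ}

lemma tendsto_measureReal_sum_le_zero_of_integral_pos (hX : ∀ i, Measurable (X i))
    (hint : Integrable (X 0) P) (hindep : Pairwise fun i j ↦ X i ⟂ᵢ[P] X j)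
    (hident : ∀ i, IdentDistrib (X i) (X 0) P P) (hmean : 0 < P[X 0]) (r : ℝ) :
    Tendsto (fun n ↦ P.real {ω | ∑ k ∈ Finset.range n, X k ω ≤ r}) atTop (𝓝 0) := by
  rw [← measureReal_empty (μ := P)]
  refine tendsto_measureReal_of_ae_eventually_mem_iff .empty
    (fun n ↦ measurableSet_le (by fun_prop) measurable_const) ?_
  filter_upwards [strong_law_ae_real X hint hindep hident] with ω hω
  have hatTop : Tendsto (fun n ↦ ∑ k ∈ Finset.range n, X k ω) atTop atTop :=
    Tendsto.num tendsto_natCast_atTop_atTop hmean hω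
  filter_upwards [hatTop.eventually_gt_atTop r] with n hn
  simpa using hn

lemma tendsto_measureReal_sum_le_one_of_integral_neg (hX : ∀ i, Measurable (X i))
    (hint : Integrable (X 0) P) (hindep : Pairwise fun i j ↦ X i ⟂ᵢ[P] X j)
    (hident : ∀ i, IdentDistrib (X i) (X 0) P P) (hmean : P[X 0] < 0) (r : ℝ) :
    Tendsto (fun n ↦ P.real {ω | ∑ k ∈ Finset.range n, X k ω ≤ r}) atTop (𝓝 1) := by
  rw [← probReal_univ (μ := P)]
  refine tendsto_measureReal_of_ae_eventually_mem_iff .univ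
    (fun n ↦ measurableSet_le (by fun_prop) measurable_const) ?_
  filter_upwards [strong_law_ae_real X hint hindep hident] with ω hω
  have hatBot : Tendsto (fun n ↦ ∑ k ∈ Finset.range n, X k ω) atTop atBot := by
    rw [← tendsto_neg_atTop_iff]
    refine Tendsto.num tendsto_natCast_atTop_atTop (neg_pos.2 hmean) ?_
    simpa only [neg_div] using hω.neg
  filter_upwards [hatBot.eventually_le_atBot r] with n hn
  simpa using hn

-- At scale `√n` the fixed level `r` is indistinguishable from `0`.
lemma tendsto_measureReal_sum_le_half_of_integral_eq_zero (hindep : iIndepFun X P)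
    (hident : ∀ i, IdentDistrib (X i) (X 0) P P) (hmean : P[X 0] = 0) (hvar : Var[X 0; P] ≠ 0)
    (r : ℝ) :
    Tendsto (fun n ↦ P.real {ω | ∑ k ∈ Finset.range n, X k ω ≤ r}) atTop (𝓝 (1 / 2)) := by
  have hv : Var[X 0; P].toNNReal ≠ 0 :=
    (Real.toNNReal_pos.2 ((variance_nonneg _ _).lt_of_ne' hvar)).ne'
  have hclt := tendstoInDistribution_inv_sqrt_mul_sum_sub .id
    (memLp_two_of_variance_ne_zero (hident 0).aemeasurable_fst.aestronglyMeasurable hvar)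
    hindep hident
  have hshift : TendstoInMeasure P (fun (n : ℕ) (_ : Ω) ↦ -((√n)⁻¹ * r)) atTop (fun _ ↦ 0) := by
    refine tendstoInMeasure_of_tendsto_ae (by fun_prop) (.of_forall fun _ ↦ ?_)
    simpa using ((tendsto_inv_atTop_zero.comp
      (tendsto_sqrt_atTop.comp tendsto_natCast_atTop_atTop)).mul_const r).neg
  have hlim := tendsto_measureReal_setOf_le_of_tendstoInDistribution (r := 0)
    (hclt.add_of_tendstoInMeasure_const hshift (by fun_prop)) (by
      have := nullSingletonClass_gaussianReal (μ := 0) hv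
      simp)
  simp only [id, add_zero, Measure.map_id', gaussianReal_zero_real_Iic_zero hv] at hlim
  refine hlim.congr' ?_
  filter_upwards [eventually_gt_atTop 0] with n hn
  have hsqrt : 0 < (√(n : ℝ))⁻¹ := by positivity
  congr 1 with ω
  simp [hmean, ← sub_eq_add_neg, hsqrt]

end RandomWalk

section NetProfit

/-- Net profit of the player as a function of the logarithm `s` of the final score: a score of at
most `1` is kept, a score above `1` is replaced by the prize. -/
noncomputable def netProfit (s : ℝ) : ℝ := if s ≤ 0 then exp s - 1 else 1

lemma measurable_netProfit : Measurable netProfit :=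
  (measurable_exp.sub_const 1).ite measurableSet_Iic measurable_const

lemma netProfit_eq_indicator (s : ℝ) :
    netProfit s = (Set.Iic 0).indicator exp s + (1 - 2 * (Set.Iic 0).indicator 1 s) := by
  by_cases hs : s ≤ 0
  · simp only [netProfit, hs, if_true, Set.mem_Iic, Set.indicator_of_mem, Pi.one_apply]
    ring
  · simp [netProfit, hs]

lemma indicator_Iic_zero_exp_le (r s : ℝ) :
    (Set.Iic 0).indicator exp s ≤
      (Set.Iic 0).indicator 1 s - (Set.Iic r).indicator 1 s + exp r := by
  by_cases hs : s ≤ 0 <;> by_cases hr : s ≤ r <;>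
    simp only [Set.mem_Iic, hs, hr, Set.indicator_of_mem, Set.indicator_of_notMem,
      not_false_eq_true, Pi.one_apply]
  · simpa using hr
  · linarith [exp_le_one_iff.2 hs, exp_pos r]
  · linarith [one_le_exp ((not_le.1 hs).le.trans hr)]
  · linarith [exp_pos r]

variable (ν : Measure ℝ)

lemma integrable_indicator_Iic_one [IsFiniteMeasure ν] (r : ℝ) :
    Integrable ((Set.Iic r).indicator (1 : ℝ → ℝ)) ν :=
  (integrable_const 1).indicator measurableSet_Iic

lemma integrable_indicator_Iic_zero_exp [IsFiniteMeasure ν] :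
    Integrable ((Set.Iic 0).indicator exp) ν := by
  refine .of_bound (measurable_exp.indicator measurableSet_Iic).aestronglyMeasurable 1
    (.of_forall fun s ↦ ?_)
  by_cases hs : s ≤ 0 <;> simp [hs]

lemma integral_netProfit [IsProbabilityMeasure ν] :
    ∫ s, netProfit s ∂ν =
      ∫ s, (Set.Iic 0).indicator exp s ∂ν + (1 - 2 * ν.real (Set.Iic 0)) := by
  have hone := integrable_indicator_Iic_one ν 0
  simp only [netProfit_eq_indicator]
  rw [integral_add (integrable_indicator_Iic_zero_exp ν) (by fun_prop),
    integral_sub (by fun_prop) (by fun_prop), integral_const_mul,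
    integral_indicator_one measurableSet_Iic]
  simp

lemma integral_indicator_Iic_zero_exp_le [IsProbabilityMeasure ν] (r : ℝ) :
    ∫ s, (Set.Iic 0).indicator exp s ∂ν ≤ ν.real (Set.Iic 0) - ν.real (Set.Iic r) + exp r := by
  have hone := integrable_indicator_Iic_one ν
  calc ∫ s, (Set.Iic 0).indicator exp s ∂ν
      ≤ ∫ s, ((Set.Iic 0).indicator 1 s - (Set.Iic r).indicator 1 s + exp r) ∂ν :=
        integral_mono (integrable_indicator_Iic_zero_exp ν) (by fun_prop)
          (indicator_Iic_zero_exp_le r)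
    _ = ν.real (Set.Iic 0) - ν.real (Set.Iic r) + exp r := by
        rw [integral_add (by fun_prop) (by fun_prop), integral_sub (by fun_prop) (by fun_prop),
          integral_indicator_one measurableSet_Iic, integral_indicator_one measurableSet_Iic]
        simp

lemma tendsto_integral_netProfit {ι : Type*} {l : Filter ι} {ν : ι → Measure ℝ}
    [∀ i, IsProbabilityMeasure (ν i)] {L : ℝ}
    (h : ∀ r, Tendsto (fun i ↦ (ν i).real (Set.Iic r)) l (𝓝 L)) :
    Tendsto (fun i ↦ ∫ s, netProfit s ∂ν i) l (𝓝 (1 - 2 * L)) := by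
  have hexp : Tendsto (fun i ↦ ∫ s, (Set.Iic 0).indicator exp s ∂ν i) l (𝓝 0) := by
    refine tendsto_order.2 ⟨fun c hc ↦ .of_forall fun i ↦ hc.trans_le ?_, fun c hc ↦ ?_⟩
    · exact integral_nonneg (Set.indicator_nonneg fun s _ ↦ (exp_pos s).le)
    · obtain ⟨r, hr⟩ := (tendsto_exp_atBot.eventually_lt_const hc).exists
      have hbound : Tendsto (fun i ↦ (ν i).real (Set.Iic 0) - (ν i).real (Set.Iic r) + exp r) l
          (𝓝 (L - L + exp r)) := ((h 0).sub (h r)).add_const _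
      filter_upwards [hbound.eventually_lt_const (by simpa using hr)] with i hi
      exact (integral_indicator_Iic_zero_exp_le (ν i) r).trans_lt hi
  simpa only [integral_netProfit, zero_add] using hexp.add (((h 0).const_mul 2).const_sub 1)

end NetProfit

section LogScore

/-- Law of the logarithm of the score after `n` rounds, each of which adds `a` to it with
probability `p` and `b` with probability `1 - p`. -/
noncomputable def logScoreLaw (n : ℕ) (a b : ℝ) (p : I) : Measure ℝ :=
  (binomial n p).map fun k : ℕ ↦ k * a + ((n : ℝ) - k) * b

instance (n : ℕ) (a b : ℝ) (p : I) : IsProbabilityMeasure (logScoreLaw n a b p) :=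
  Measure.isProbabilityMeasure_map .of_discrete

lemma integral_logScoreLaw {E : Type*} [NormedAddCommGroup E] [NormedSpace ℝ E] [CompleteSpace E]
    (n : ℕ) (a b : ℝ) (p : I) {f : ℝ → E} (hf : StronglyMeasurable f) :
    ∫ s, f s ∂logScoreLaw n a b p =
      ∑ k ∈ Finset.Iic n, (n.choose k * (p : ℝ) ^ k * (1 - p) ^ (n - k)) •
        f (k * a + ((n : ℝ) - k) * b) := by
  rw [logScoreLaw, integral_map .of_discrete hf.aestronglyMeasurable, integral_binomial]

lemma charFun_logScoreLaw (n : ℕ) (a b : ℝ) (p : I) (t : ℝ) :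
    charFun (logScoreLaw n a b p) t = charFun (bernoulliMeasure a b p) t ^ n := by
  rw [charFun_apply_real, charFun_apply_real, integral_logScoreLaw _ _ _ _ (by fun_prop),
    integral_bernoulliMeasure, add_pow, Nat.range_succ_eq_Iic]
  refine Finset.sum_congr rfl fun k hk ↦ ?_
  have hexp : Complex.exp (t * (k * a + ((n : ℝ) - k) * b : ℝ) * Complex.I) =
      Complex.exp (t * a * Complex.I) ^ k * Complex.exp (t * b * Complex.I) ^ (n - k) := by
    rw [← Complex.exp_nat_mul, ← Complex.exp_nat_mul, ← Complex.exp_add,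
      Nat.cast_sub (Finset.mem_Iic.1 hk)]
    congr 1
    push_cast
    ring
  simp only [hexp, Complex.real_smul, mul_pow]
  push_cast
  ring

lemma hasLaw_sum_logScoreLaw {Ω : Type*} {mΩ : MeasurableSpace Ω} {P : Measure Ω} {p : I}
    {a b : ℝ} {X : ℕ → Ω → ℝ} (hindep : iIndepFun X P)
    (hlaw : ∀ i, HasLaw (X i) (bernoulliMeasure a b p) P) (n : ℕ) :
    HasLaw (fun ω ↦ ∑ k ∈ Finset.range n, X k ω) (logScoreLaw n a b p) P where
  aemeasurable := Finset.aemeasurable_fun_sum _ fun i _ ↦ (hlaw i).aemeasurable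
  map_eq := by
    have : IsProbabilityMeasure P := (hlaw 0).isProbabilityMeasure
    refine Measure.ext_of_charFun (funext fun t ↦ ?_)
    rw [(hindep.restrict _).charFun_map_fun_finsetSum_eq_prod fun i _ ↦ (hlaw i).aemeasurable]
    simp [(hlaw _).map_eq, charFun_logScoreLaw]

lemma logScoreLaw_real_Iic {Ω : Type*} {mΩ : MeasurableSpace Ω} {P : Measure Ω} {a b : ℝ} {p : I}
    {X : ℕ → Ω → ℝ} (hindep : iIndepFun X P)
    (hlaw : ∀ i, HasLaw (X i) (bernoulliMeasure a b p) P) (n : ℕ) (r : ℝ) :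
    (logScoreLaw n a b p).real (Set.Iic r) = P.real {ω | ∑ k ∈ Finset.range n, X k ω ≤ r} := by
  have hsum := hasLaw_sum_logScoreLaw hindep hlaw n
  rw [← hsum.map_eq]
  exact map_measureReal_apply_of_aemeasurable hsum.aemeasurable measurableSet_Iic

lemma integral_id_bernoulliMeasure (a b : ℝ) (p : I) :
    ∫ x, x ∂bernoulliMeasure a b p = p * a + (1 - p) * b := by
  simp [integral_bernoulliMeasure]

lemma variance_id_bernoulliMeasure (a b : ℝ) (p : I) :
    Var[id; bernoulliMeasure a b p] = p * (1 - p) * (a - b) ^ 2 := by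
  rw [variance_eq_integral (by fun_prop)]
  simp only [id, integral_bernoulliMeasure, smul_eq_mul]
  ring

variable {a b : ℝ} {p : I}

lemma tendsto_logScoreLaw_real_Iic_zero_of_drift_pos (hdrift : 0 < p * a + (1 - p) * b) (r : ℝ) :
    Tendsto (fun n ↦ (logScoreLaw n a b p).real (Set.Iic r)) atTop (𝓝 0) := by
  obtain ⟨Ω, _, P, X, hX, hlaw, hindep, _⟩ := exists_iid ℕ (bernoulliMeasure a b p)
  simp only [logScoreLaw_real_Iic hindep hlaw]
  refine tendsto_measureReal_sum_le_zero_of_integral_pos hX ?_ (fun i j hij ↦ hindep.indepFun hij)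
    (fun i ↦ (hlaw i).identDistrib (hlaw 0)) ?_ r
  · exact ((hlaw 0).identDistrib .id).integrable_iff.2 (integrable_bernoulliMeasure a b p id)
  · rwa [(hlaw 0).integral_eq, integral_id_bernoulliMeasure]

lemma tendsto_logScoreLaw_real_Iic_one_of_drift_neg (hdrift : p * a + (1 - p) * b < 0) (r : ℝ) :
    Tendsto (fun n ↦ (logScoreLaw n a b p).real (Set.Iic r)) atTop (𝓝 1) := by
  obtain ⟨Ω, _, P, X, hX, hlaw, hindep, _⟩ := exists_iid ℕ (bernoulliMeasure a b p)
  simp only [logScoreLaw_real_Iic hindep hlaw]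
  refine tendsto_measureReal_sum_le_one_of_integral_neg hX ?_ (fun i j hij ↦ hindep.indepFun hij)
    (fun i ↦ (hlaw i).identDistrib (hlaw 0)) ?_ r
  · exact ((hlaw 0).identDistrib .id).integrable_iff.2 (integrable_bernoulliMeasure a b p id)
  · rwa [(hlaw 0).integral_eq, integral_id_bernoulliMeasure]

lemma tendsto_logScoreLaw_real_Iic_half_of_drift_eq_zero (hp0 : 0 < (p : ℝ))
    (hp1 : (p : ℝ) < 1) (hab : a ≠ b) (hdrift : p * a + (1 - p) * b = 0) (r : ℝ) :
    Tendsto (fun n ↦ (logScoreLaw n a b p).real (Set.Iic r)) atTop (𝓝 (1 / 2)) := by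
  obtain ⟨Ω, _, P, X, -, hlaw, hindep, _⟩ := exists_iid ℕ (bernoulliMeasure a b p)
  simp only [logScoreLaw_real_Iic hindep hlaw]
  refine tendsto_measureReal_sum_le_half_of_integral_eq_zero hindep
    (fun i ↦ (hlaw i).identDistrib (hlaw 0)) ?_ ?_ r
  · rwa [(hlaw 0).integral_eq, integral_id_bernoulliMeasure]
  · rw [(hlaw 0).variance_eq, variance_id_bernoulliMeasure]
    exact mul_ne_zero (mul_ne_zero hp0.ne' (sub_pos.2 hp1).ne') (pow_ne_zero 2 (sub_ne_zero.2 hab))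

end LogScore

section Game

variable {u d : ℝ}

lemma le_ktilde_iff (hd0 : 0 < d) (hd1 : d ≤ 1) (hdu : d < u) (n k : ℕ) :
    k ≤ ktilde n u d ↔ k * log u + ((n : ℝ) - k) * log d ≤ 0 := by
  have hlog : 0 < log u - log d := sub_pos.2 (log_lt_log hd0 hdu)
  have hfloor : 0 ≤ n * log (1 / d) / log (u / d) :=
    div_nonneg (mul_nonneg n.cast_nonneg (log_nonneg ((one_le_div hd0).2 hd1)))
      (log_nonneg ((one_le_div hd0).2 hdu.le))
  rw [ktilde, Nat.le_floor_iff hfloor, log_div (hd0.trans hdu).ne' hd0.ne', one_div, log_inv,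
    le_div_iff₀ hlog, ← sub_nonpos]
  ring_nf

lemma exp_logScore (hu : 0 < u) (hd : 0 < d) {n k : ℕ} (hk : k ≤ n) :
    exp (k * log u + ((n : ℝ) - k) * log d) = u ^ k * d ^ (n - k) := by
  rw [exp_add, ← Nat.cast_sub hk, exp_nat_mul, exp_nat_mul, exp_log hu, exp_log hd]

lemma netProfit_logScore (hd0 : 0 < d) (hd1 : d ≤ 1) (hdu : d < u) {n k : ℕ} (hk : k ≤ n) :
    netProfit (k * log u + ((n : ℝ) - k) * log d) =
      if k ≤ ktilde n u d then u ^ k * d ^ (n - k) - 1 else 1 := by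
  simp only [netProfit, le_ktilde_iff hd0 hd1 hdu, exp_logScore (hd0.trans hdu) hd0 hk]

lemma sum_range_succ_eq_sum_Iic_ite {M : Type*} [AddCommMonoid M] {f : ℕ → M} {n : ℕ}
    (hf : ∀ k, n < k → f k = 0) (m : ℕ) :
    ∑ k ∈ Finset.range (m + 1), f k = ∑ k ∈ Finset.Iic n, if k ≤ m then f k else 0 := by
  rw [← Finset.sum_filter]
  refine (Finset.sum_subset (fun k ↦ by simp +contextual) fun k _ hk ↦ hf k ?_).symm
  simp_all

lemma G_eq_integral_netProfit (hd0 : 0 < d) (hd1 : d ≤ 1) (hdu : d < u) (n : ℕ) (p : I) :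
    G n u d p = ∫ s, netProfit s ∂logScoreLaw n (log u) (log d) p := by
  have hlose : ∀ k, n < k → (n.choose k : ℝ) * (p * u) ^ k * ((1 - p) * d) ^ (n - k) = 0 :=
    fun k hk ↦ by simp [Nat.choose_eq_zero_of_lt hk]
  have hwin : Finset.Icc (ktilde n u d + 1) n = {k ∈ Finset.Iic n | ¬k ≤ ktilde n u d} := by
    ext k
    simp only [Finset.mem_Icc, Finset.mem_filter, Finset.mem_Iic]
    omega
  have hmass : (-1 : ℝ) = ∑ k ∈ Finset.Iic n, -(n.choose k * (p : ℝ) ^ k * (1 - p) ^ (n - k)) := by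
    simpa using (integral_binomial (n := n) (p := p) fun _ ↦ (-1 : ℝ))
  rw [G, hmass, integral_logScoreLaw _ _ _ _ measurable_netProfit.stronglyMeasurable,
    sum_range_succ_eq_sum_Iic_ite hlose, hwin, Finset.sum_filter, Finset.mul_sum,
    ← Finset.sum_add_distrib, ← Finset.sum_add_distrib]
  refine Finset.sum_congr rfl fun k hk ↦ ?_
  rw [netProfit_logScore hd0 hd1 hdu (Finset.mem_Iic.1 hk), smul_eq_mul, mul_pow, mul_pow]
  split_ifs <;> ring

lemma log_rpow_mul_rpow (hu : 0 < u) (hd : 0 < d) (p q : ℝ) :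
    log (u ^ p * d ^ q) = p * log u + q * log d := by
  rw [log_mul (rpow_pos_of_pos hu p).ne' (rpow_pos_of_pos hd q).ne', log_rpow hu, log_rpow hd]

end Game

theorem expected_net_profit_threshold_biased_general (u d p : ℝ) (hp0 : 0 < p) (hp1 : p < 1)
    (hd0 : 0 < d) (hd1 : d ≤ 1) (hdu : d < u) :
    (1 < u ^ p * d ^ (1 - p) → Tendsto (fun n : ℕ ↦ G n u d p) atTop (𝓝 1)) ∧
    (u ^ p * d ^ (1 - p) = 1 → Tendsto (fun n : ℕ ↦ G n u d p) atTop (𝓝 0)) ∧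
    (u ^ p * d ^ (1 - p) < 1 → Tendsto (fun n : ℕ ↦ G n u d p) atTop (𝓝 (-1))) := by
  have hu0 : 0 < u := hd0.trans hdu
  have hmean0 : 0 < u ^ p * d ^ (1 - p) := by positivity
  have hdrift := log_rpow_mul_rpow hu0 hd0 p (1 - p)
  lift p to I using ⟨hp0.le, hp1.le⟩
  simp only [G_eq_integral_netProfit hd0 hd1 hdu]
  refine ⟨fun h ↦ ?_, fun h ↦ ?_, fun h ↦ ?_⟩
  · simpa using tendsto_integral_netProfit
      (tendsto_logScoreLaw_real_Iic_zero_of_drift_pos (hdrift ▸ log_pos h))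
  · simpa using tendsto_integral_netProfit
      (tendsto_logScoreLaw_real_Iic_half_of_drift_eq_zero hp0 hp1 (log_lt_log hd0 hdu).ne'
        (by rw [← hdrift, h, log_one]))
  · convert tendsto_integral_netProfit
      (tendsto_logScoreLaw_real_Iic_one_of_drift_neg (hdrift ▸ log_neg hmean0 h)) using 2
    norm_num

theorem expected_net_profit_threshold_biased (u d p : ℝ)
    (hp0 : 0 < p) (hp1 : p < 1)
    (hd0 : 0 < d) (hd1 : d ≤ 1) (hu : 1 ≤ u) (hne : u ≠ d) :
    (1 < u ^ p * d ^ (1 - p) → Tendsto (fun n : ℕ => G n u d p) atTop (nhds 1)) ∧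
    (u ^ p * d ^ (1 - p) = 1 → Tendsto (fun n : ℕ => G n u d p) atTop (nhds 0)) ∧
    (u ^ p * d ^ (1 - p) < 1 → Tendsto (fun n : ℕ => G n u d p) atTop (nhds (-1))) :=
  expected_net_profit_threshold_biased_general u d p hp0 hp1 hd0 hd1
    (lt_of_le_of_ne (hd1.trans hu) hne.symm)
end

section
/- Let $p \in (0,1)$, $0 < d \le 1 \le u$ with $u \ne d$ and $u^p d^{1-p} = 1$, $\tilde{k}_0(n,u,d) = \lfloor n \ln(1/d)/\ln(u/d) \rfloor$, let $X_n$ be a Binomial$(n,p)$ random variable, and define the net profit $T_n = -1 + \sum_{k=0}^{\tilde{k}_0(n,u,d)} \mathbf{1}\{X_n = k\}\, u^k d^{n-k} + 2\cdot\mathbf{1}\{X_n \ge \tilde{k}_0(n,u,d)+1\}$. Then $T_n$ converges in distribution, as $n \to \infty$, to the random variable $Z$ with two-point distribution $\mathbb{P}(Z = 1) = \mathbb{P}(Z = -1) = 1/2$. -/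
open Filter MeasureTheory

/-!
In the critical case `u ^ p * d ^ (1 - p) = 1` the threshold is `⌊n * p⌋₊`, and the profit depends
on the number of heads only through its excess `x = X n - n * p` over the mean: it is `1` when
`x > 0` and `exp (x * log (u / d)) - 1` otherwise, a function with limits `1` at `+∞` and `-1` at
`-∞`. By the de Moivre–Laplace theorem the excess is of order `√n`, with a symmetric limit without
atom at `0`, so it escapes to `+∞` or `-∞` with probability `1 / 2` each.
-/

open ProbabilityTheory Topology unitInterval

section ConvergenceInDistribution

variable {ι Ω' : Type*} {Ω : ι → Type*} {m : ∀ i, MeasurableSpace (Ω i)} {m' : MeasurableSpace Ω'}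
  {P : ∀ i, Measure (Ω i)} [∀ i, IsProbabilityMeasure (P i)]
  {P' : Measure Ω'} [IsProbabilityMeasure P'] {l : Filter ι}
  {E : Type*} [TopologicalSpace E] [MeasurableSpace E] {X : ∀ i, Ω i → E} {Z : Ω' → E}

theorem tendsto_integral_of_tendstoInDistribution [OpensMeasurableSpace E]
    (h : TendstoInDistribution X l Z P P') (f : BoundedContinuousFunction E ℝ) :
    Tendsto (fun i ↦ ∫ ω, f (X i ω) ∂P i) l (𝓝 (∫ ω, f (Z ω) ∂P')) := by
  have hlim := ProbabilityMeasure.tendsto_iff_forall_integral_tendsto.1 h.tendsto f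
  simp only [ProbabilityMeasure.coe_mk] at hlim
  rw [integral_map h.aemeasurable_limit f.continuous.measurable.aestronglyMeasurable] at hlim
  exact hlim.congr fun i ↦
    integral_map (h.forall_aemeasurable i) f.continuous.measurable.aestronglyMeasurable

variable {F : Type*} [TopologicalSpace F]

theorem measure_preimage_le_liminf_of_ae_tendsto [OpensMeasurableSpace E] [HasOuterApproxClosed E]
    [l.IsCountablyGenerated] {g : ι → E → F} {g' : E → F}
    (h : TendstoInDistribution X l Z P P')
    (hg : ∀ᵐ ω ∂P', Tendsto (fun q : ι × E ↦ g q.1 q.2) (l ×ˢ 𝓝 (Z ω)) (𝓝 (g' (Z ω))))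
    {G : Set F} (hG : IsOpen G) :
    P' {ω | g' (Z ω) ∈ G} ≤ l.liminf fun i ↦ P i {ω | g i (X i ω) ∈ G} := by
  obtain ⟨s, hs⟩ := l.exists_antitone_basis
  let U : ℕ → Set E := fun k ↦ interior {x | ∀ i ∈ s k, g i x ∈ G}
  have hUmono : Monotone U := fun j k hjk ↦
    interior_mono fun x hx i hi ↦ hx i (hs.antitone hjk hi)
  have hsub : {ω | g' (Z ω) ∈ G} ≤ᵐ[P'] ⋃ k, Z ⁻¹' U k := by
    filter_upwards [hg] with ω hω hωG
    obtain ⟨A, hA, V, hV, hAV⟩ := mem_prod_iff.1 (hω (hG.mem_nhds hωG))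
    obtain ⟨k, hk⟩ := hs.mem_iff.1 hA
    exact Set.mem_iUnion.2 ⟨k, mem_interior_iff_mem_nhds.2 <|
      mem_of_superset hV fun x hx i hi ↦ hAV (Set.mk_mem_prod (hk hi) hx)⟩
  have hU (k : ℕ) : P' (Z ⁻¹' U k) ≤ l.liminf fun i ↦ P i {ω | g i (X i ω) ∈ G} := by
    have hopen := ProbabilityMeasure.le_liminf_measure_open_of_tendsto h.tendsto
      (isOpen_interior : IsOpen (U k))
    simp only [ProbabilityMeasure.coe_mk] at hopen
    rw [Measure.map_apply_of_aemeasurable h.aemeasurable_limit isOpen_interior.measurableSet]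
      at hopen
    refine hopen.trans (liminf_le_liminf ?_)
    filter_upwards [hs.mem k] with i hi
    rw [Measure.map_apply_of_aemeasurable (h.forall_aemeasurable i) isOpen_interior.measurableSet]
    exact measure_mono fun ω hω ↦ interior_subset hω i hi
  calc P' {ω | g' (Z ω) ∈ G} ≤ P' (⋃ k, Z ⁻¹' U k) := measure_mono_ae hsub
    _ = ⨆ k, P' (Z ⁻¹' U k) :=
      Monotone.measure_iUnion fun _ _ hjk ↦ Set.preimage_mono (hUmono hjk)
    _ ≤ _ := iSup_le hU

/-- The extended continuous mapping theorem: the functions may vary along the sequence, provided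
that they converge continuously at almost every value of the limit. -/
theorem tendstoInDistribution_comp_of_ae_tendsto [OpensMeasurableSpace E] [HasOuterApproxClosed E]
    [MeasurableSpace F] [OpensMeasurableSpace F] [l.IsCountablyGenerated]
    {g : ι → E → F} {g' : E → F} (h : TendstoInDistribution X l Z P P')
    (hgm : ∀ i, Measurable (g i)) (hgm' : Measurable g')
    (hg : ∀ᵐ ω ∂P', Tendsto (fun q : ι × E ↦ g q.1 q.2) (l ×ˢ 𝓝 (Z ω)) (𝓝 (g' (Z ω)))) :
    TendstoInDistribution (fun i ω ↦ g i (X i ω)) l (fun ω ↦ g' (Z ω)) P P' where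
  forall_aemeasurable i := (hgm i).comp_aemeasurable (h.forall_aemeasurable i)
  aemeasurable_limit := hgm'.comp_aemeasurable h.aemeasurable_limit
  tendsto := by
    have hX (i : ι) : AEMeasurable (fun ω ↦ g i (X i ω)) (P i) :=
      (hgm i).comp_aemeasurable (h.forall_aemeasurable i)
    have hZ : AEMeasurable (fun ω ↦ g' (Z ω)) P' := hgm'.comp_aemeasurable h.aemeasurable_limit
    refine tendsto_of_forall_isOpen_le_liminf' fun G hG ↦ ?_
    simp only [ProbabilityMeasure.coe_mk, Measure.map_apply_of_aemeasurable hZ hG.measurableSet,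
      Measure.map_apply_of_aemeasurable (hX _) hG.measurableSet]
    exact measure_preimage_le_liminf_of_ae_tendsto h hg hG

end ConvergenceInDistribution

section Rescaling

variable {ι : Type*} {l : Filter ι} {c : ι → ℝ} {F : Type*} [TopologicalSpace F]
  {φ : ℝ → F} {a b : F}

theorem tendsto_comp_mul_prod_nhds (hc : Tendsto c l atTop) (ha : Tendsto φ atTop (𝓝 a))
    (hb : Tendsto φ atBot (𝓝 b)) {x : ℝ} (hx : x ≠ 0) :
    Tendsto (fun q : ι × ℝ ↦ φ (c q.1 * q.2)) (l ×ˢ 𝓝 x) (𝓝 (if 0 < x then a else b)) := by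
  have hc' : Tendsto (fun q : ι × ℝ ↦ c q.1) (l ×ˢ 𝓝 x) atTop := hc.comp tendsto_fst
  rcases hx.lt_or_gt with hneg | hpos
  · rw [if_neg hneg.not_gt]
    exact hb.comp (hc'.atTop_mul_neg hneg tendsto_snd)
  · rw [if_pos hpos]
    exact ha.comp (hc'.atTop_mul_pos hpos tendsto_snd)

theorem tendstoInDistribution_comp_mul {Ω' : Type*} {Ω : ι → Type*}
    {_ : ∀ i, MeasurableSpace (Ω i)} {_ : MeasurableSpace Ω'}
    {P : ∀ i, Measure (Ω i)} [∀ i, IsProbabilityMeasure (P i)]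
    {P' : Measure Ω'} [IsProbabilityMeasure P'] {Y : ∀ i, Ω i → ℝ} {Z : Ω' → ℝ}
    [MeasurableSpace F] [OpensMeasurableSpace F] [l.IsCountablyGenerated]
    (hY : TendstoInDistribution Y l Z P P') (hZ : ∀ᵐ ω ∂P', Z ω ≠ 0) (hc : Tendsto c l atTop)
    (hφ : Measurable φ) (ha : Tendsto φ atTop (𝓝 a)) (hb : Tendsto φ atBot (𝓝 b)) :
    TendstoInDistribution (fun i ω ↦ φ (c i * Y i ω)) l (fun ω ↦ if 0 < Z ω then a else b) P P' :=
  tendstoInDistribution_comp_of_ae_tendsto hY (fun i ↦ hφ.comp (measurable_const_mul (c i)))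
    (.ite measurableSet_Ioi measurable_const measurable_const)
    (hZ.mono fun _ hω ↦ tendsto_comp_mul_prod_nhds hc ha hb hω)

end Rescaling

section Symmetric

theorem integral_ite_pos_eq_midpoint {E : Type*} [NormedAddCommGroup E] [NormedSpace ℝ E]
    [CompleteSpace E] (μ : Measure ℝ) [IsProbabilityMeasure μ] [μ.IsNegInvariant]
    [NullSingletonClass μ] (a b : E) :
    ∫ x, (if 0 < x then a else b) ∂μ = midpoint ℝ a b := by
  let h : ℝ → E := fun x ↦ if 0 < x then a else b
  have hint : Integrable h μ :=
    .of_bound (StronglyMeasurable.ite measurableSet_Ioi stronglyMeasurable_const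
      stronglyMeasurable_const).aestronglyMeasurable (max ‖a‖ ‖b‖)
      (ae_of_all _ fun x ↦ by by_cases hx : 0 < x <;> simp [h, hx])
  have hsum : ∀ᵐ x ∂μ, h x + h (-x) = a + b := by
    filter_upwards [compl_mem_ae_iff.2 (measure_singleton (μ := μ) 0)] with x hx
    rcases lt_or_gt_of_ne hx with hneg | hpos
    · simp [h, hneg, hneg.not_gt, add_comm]
    · simp [h, hpos, hpos.not_gt]
  have hdouble : ∫ x, h x ∂μ + ∫ x, h x ∂μ = a + b := by
    nth_rw 2 [← integral_neg_eq_self h μ]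
    rw [← integral_add hint hint.comp_neg, integral_congr_ae hsum]
    simp
  rw [midpoint_eq_smul_add, ← hdouble, ← two_smul ℝ, smul_smul]
  simp [h]

theorem isNegInvariant_gaussianReal_zero (v : NNReal) : (gaussianReal 0 v).IsNegInvariant :=
  ⟨(gaussianReal_map_neg (μ := 0) (v := v)).trans (by rw [neg_zero])⟩

end Symmetric

section Binomial

theorem charFun_map_binomial (n : ℕ) (p : I) (a b t : ℝ) :
    charFun ((binomial n p).map fun k : ℕ ↦ k * a + (n - k) * b) t =
      charFun (bernoulliMeasure a b p) t ^ n := by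
  rw [charFun_apply_real, integral_map Measurable.of_discrete.aemeasurable (by fun_prop),
    integral_binomial, charFun_apply_real, integral_bernoulliMeasure, add_pow,
    ← Nat.range_succ_eq_Iic]
  refine Finset.sum_congr rfl fun k hk ↦ ?_
  have hkn : k ≤ n := Finset.mem_range_succ_iff.1 hk
  have hexp : Complex.exp (t * ((k * a + (n - k) * b : ℝ) : ℂ) * Complex.I) =
      Complex.exp (t * a * Complex.I) ^ k * Complex.exp (t * b * Complex.I) ^ (n - k) := by
    rw [← Complex.exp_nat_mul, ← Complex.exp_nat_mul, ← Complex.exp_add, Nat.cast_sub hkn]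
    push_cast
    ring_nf
  rw [hexp]
  simp only [Complex.real_smul, mul_pow]
  push_cast
  ring

theorem tendsto_charFun_bernoulliMeasure_standardized {p : I} (hp0 : 0 < p) (hp1 : p < 1) (t : ℝ) :
    Tendsto (fun n : ℕ ↦ charFun (bernoulliMeasure ((1 - p) / √(p * (1 - p)) : ℝ)
      (-p / √(p * (1 - p))) p) ((√n)⁻¹ * t) ^ n) atTop (𝓝 (Complex.exp (-t ^ 2 / 2))) := by
  have hp : (0 : ℝ) < p := hp0
  have hq : (0 : ℝ) < 1 - p := sub_pos.2 hp1
  simpa only [Measure.map_id] using tendsto_charFun_inv_sqrt_mul_pow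
    (P := bernoulliMeasure ((1 - p) / √(p * (1 - p)) : ℝ) (-p / √(p * (1 - p))) p)
    aemeasurable_id
    (by rw [integral_bernoulliMeasure]; simp only [id, smul_eq_mul]; ring)
    (by
      rw [integral_bernoulliMeasure]
      simp only [id, smul_eq_mul, Pi.pow_apply, div_pow, Real.sq_sqrt (mul_pos hp hq).le]
      field_simp
      ring) t

variable {Ω' : Type*} {Ω : ℕ → Type*} {m : ∀ n, MeasurableSpace (Ω n)} {m' : MeasurableSpace Ω'}
  {P : ∀ n, Measure (Ω n)} [∀ n, IsProbabilityMeasure (P n)]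
  {P' : Measure Ω'} [IsProbabilityMeasure P'] {X : ∀ n, Ω n → ℕ} {Z : Ω' → ℝ} {p : I}

/-- The **de Moivre–Laplace theorem**. -/
theorem tendstoInDistribution_binomial_standardized (hp0 : 0 < p) (hp1 : p < 1)
    (hX : ∀ n, HasLaw (X n) (binomial n p) (P n)) (hZ : HasLaw Z (gaussianReal 0 1) P') :
    TendstoInDistribution (fun (n : ℕ) ω ↦ (√n)⁻¹ * ((X n ω - n * p) / √(p * (1 - p)))) atTop Z
      P P' where
  forall_aemeasurable n := Measurable.of_discrete
    (f := fun k : ℕ ↦ (√n)⁻¹ * ((k - n * p) / √(p * (1 - p)))) |>.comp_aemeasurable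
    (hX n).aemeasurable
  aemeasurable_limit := hZ.aemeasurable
  tendsto := by
    refine ProbabilityMeasure.tendsto_iff_tendsto_charFun.2 fun t ↦ ?_
    have hsplit (n : ℕ) : (fun ω ↦ (X n ω - n * p) / √(p * (1 - p)) : Ω n → ℝ) =
        (fun k : ℕ ↦
          k * ((1 - p) / √(p * (1 - p)) : ℝ) + (n - k) * (-p / √(p * (1 - p)))) ∘ X n := by
      ext ω
      simp only [Function.comp_apply]
      ring
    have hmeas (n : ℕ) : AEMeasurable (fun ω ↦ (X n ω - n * p) / √(p * (1 - p)) : Ω n → ℝ) (P n) :=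
      hsplit n ▸ Measurable.of_discrete.comp_aemeasurable (hX n).aemeasurable
    have hchar (n : ℕ) :
        charFun ((P n).map fun ω ↦ (√n)⁻¹ * ((X n ω - n * p) / √(p * (1 - p)))) t =
          charFun (bernoulliMeasure ((1 - p) / √(p * (1 - p)) : ℝ) (-p / √(p * (1 - p))) p)
            ((√n)⁻¹ * t) ^ n := by
      rw [charFun_map_mul_comp (hmeas n), hsplit, ← AEMeasurable.map_map_of_aemeasurable
        Measurable.of_discrete.aemeasurable (hX n).aemeasurable, (hX n).map_eq,
        charFun_map_binomial]
    simp only [ProbabilityMeasure.coe_mk, hZ.map_eq, hchar, charFun_gaussianReal]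
    simpa [neg_div] using tendsto_charFun_bernoulliMeasure_standardized hp0 hp1 t

theorem tendstoInDistribution_comp_binomial_sub_mean {F : Type*} [TopologicalSpace F]
    [MeasurableSpace F] [OpensMeasurableSpace F] {φ : ℝ → F} {a b : F}
    (hp0 : 0 < p) (hp1 : p < 1) (hX : ∀ n, HasLaw (X n) (binomial n p) (P n))
    (hZ : HasLaw Z (gaussianReal 0 1) P') (hφ : Measurable φ) (ha : Tendsto φ atTop (𝓝 a))
    (hb : Tendsto φ atBot (𝓝 b)) :
    TendstoInDistribution (fun (n : ℕ) ω ↦ φ (X n ω - n * p)) atTop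
      (fun ω ↦ if 0 < Z ω then a else b) P P' := by
  have hσ : 0 < √(p * (1 - p) : ℝ) := Real.sqrt_pos.2 (mul_pos hp0 (sub_pos.2 hp1))
  have hscale : Tendsto (fun n : ℕ ↦ √n * √(p * (1 - p) : ℝ)) atTop atTop :=
    (Real.tendsto_sqrt_atTop.comp tendsto_natCast_atTop_atTop).atTop_mul_const hσ
  have : NullSingletonClass (gaussianReal 0 1) := nullSingletonClass_gaussianReal one_ne_zero
  have hZ0 : ∀ᵐ ω ∂P', Z ω ≠ 0 :=
    (hZ.ae_iff (p := (· ≠ 0)) (by fun_prop)).2 (compl_mem_ae_iff.2 (measure_singleton 0))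
  refine (tendstoInDistribution_comp_mul (tendstoInDistribution_binomial_standardized hp0 hp1 hX hZ)
    hZ0 hscale hφ ha hb).congr (fun n ↦ ?_) .rfl
  filter_upwards [ae_le_of_hasLaw_binomial (hX n)] with ω hω
  rcases n.eq_zero_or_pos with rfl | hn
  · simp [Nat.le_zero.1 hω]
  · congr 1
    field_simp

end Binomial

section NetProfit

/-- The net profit in the critical case, as a function of the excess `x` of the number of heads over
its mean `n * p`; here `r` stands for `log (u / d)`. -/
noncomputable def profitOfExcess (r x : ℝ) : ℝ :=
  if 0 < x then 1 else Real.exp (r * x) - 1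

theorem measurable_profitOfExcess (r : ℝ) : Measurable (profitOfExcess r) :=
  .ite measurableSet_Ioi measurable_const (by fun_prop)

theorem tendsto_profitOfExcess_atTop (r : ℝ) : Tendsto (profitOfExcess r) atTop (𝓝 1) :=
  tendsto_const_nhds.congr' <| (eventually_gt_atTop 0).mono fun _ hx ↦ (if_pos hx).symm

theorem tendsto_profitOfExcess_atBot {r : ℝ} (hr : 0 < r) :
    Tendsto (profitOfExcess r) atBot (𝓝 (-1)) := by
  have hexp : Tendsto (fun x ↦ Real.exp (r * x) - 1) atBot (𝓝 (-1)) := by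
    simpa using (Real.tendsto_exp_atBot.comp (tendsto_id.const_mul_atBot hr)).sub_const 1
  exact hexp.congr' <| (eventually_le_atBot 0).mono fun _ hx ↦ (if_neg hx.not_gt).symm

variable {p u d : ℝ}

theorem log_eq_neg_mul_log_div (hu : 0 < u) (hd : 0 < d) (hcrit : u ^ p * d ^ (1 - p) = 1) :
    Real.log d = -(p * Real.log (u / d)) := by
  have hlog := congrArg Real.log hcrit
  rw [Real.log_mul (Real.rpow_pos_of_pos hu _).ne' (Real.rpow_pos_of_pos hd _).ne',
    Real.log_rpow hu, Real.log_rpow hd, Real.log_one] at hlog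
  rw [Real.log_div hu.ne' hd.ne']
  linarith

theorem ktilde_eq_floor_mul (hd : 0 < d) (hdu : d < u) (hcrit : u ^ p * d ^ (1 - p) = 1) (n : ℕ) :
    ktilde n u d = ⌊n * p⌋₊ := by
  have hlog : Real.log (u / d) ≠ 0 := (Real.log_pos ((one_lt_div hd).2 hdu)).ne'
  rw [ktilde, one_div, Real.log_inv, log_eq_neg_mul_log_div (hd.trans hdu) hd hcrit, neg_neg,
    ← mul_assoc, mul_div_cancel_right₀ _ hlog]

theorem pow_mul_pow_sub_eq_exp (hu : 0 < u) (hd : 0 < d) (hcrit : u ^ p * d ^ (1 - p) = 1)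
    {n k : ℕ} (hkn : k ≤ n) :
    u ^ k * d ^ (n - k) = Real.exp (Real.log (u / d) * (k - n * p)) := by
  have hlogd := log_eq_neg_mul_log_div hu hd hcrit
  have hlogu : Real.log u = Real.log (u / d) + Real.log d := by
    rw [Real.log_div hu.ne' hd.ne', sub_add_cancel]
  calc u ^ k * d ^ (n - k) = Real.exp (k * Real.log u + (n - k : ℕ) * Real.log d) := by
        rw [Real.exp_add, Real.exp_nat_mul, Real.exp_nat_mul, Real.exp_log hu, Real.exp_log hd]
    _ = Real.exp (Real.log (u / d) * (k - n * p)) := by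
        rw [hlogu, hlogd, Nat.cast_sub hkn]
        ring_nf

theorem netProfit_eq_profitOfExcess (hp0 : 0 ≤ p) (hp1 : p ≤ 1) (hd : 0 < d) (hdu : d < u)
    (hcrit : u ^ p * d ^ (1 - p) = 1) (n x : ℕ) :
    -1 + (∑ k ∈ Finset.range (ktilde n u d + 1), if x = k then u ^ k * d ^ (n - k) else 0)
        + 2 * (if ktilde n u d + 1 ≤ x then (1 : ℝ) else 0) =
      profitOfExcess (Real.log (u / d)) (x - n * p) := by
  have hwin : ktilde n u d + 1 ≤ x ↔ 0 < x - n * p := by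
    rw [ktilde_eq_floor_mul hd hdu hcrit, Nat.add_one_le_iff, Nat.floor_lt (by positivity), sub_pos]
  rw [Finset.sum_ite_eq, profitOfExcess]
  by_cases hx : 0 < x - n * p
  · have hout : x ∉ Finset.range (ktilde n u d + 1) := by simpa using hwin.2 hx
    rw [if_pos hx, if_pos (hwin.2 hx), if_neg hout]
    norm_num
  · have hin : x ∈ Finset.range (ktilde n u d + 1) := by simpa using mt hwin.1 hx
    have hxn : x ≤ n := by
      have hnp : n * p ≤ n := mul_le_of_le_one_right n.cast_nonneg hp1
      exact_mod_cast (show (x : ℝ) ≤ n by linarith)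
    rw [if_neg hx, if_neg (mt hwin.1 hx), if_pos hin,
      pow_mul_pow_sub_eq_exp (hd.trans hdu) hd hcrit hxn]
    ring

end NetProfit

theorem hasLaw_binomial_of_measure_eq {Ω : Type*} [MeasurableSpace Ω] {μ : Measure Ω} {p : I}
    {n : ℕ} {X : Ω → ℕ} (hX : Measurable X) (hμ : ∀ k : ℕ,
      μ {ω | X ω = k} = ENNReal.ofReal ((n.choose k : ℝ) * p ^ k * (1 - p) ^ (n - k))) :
    HasLaw X (binomial n p) μ where
  aemeasurable := hX.aemeasurable
  map_eq := Measure.ext_of_singleton fun k ↦ by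
    rw [binomial_singleton, Measure.map_apply hX (measurableSet_singleton k)]
    exact hμ k

/-- In the critical case `u^p * d^(1-p) = 1`, the net profit `T n` converges in
distribution to the two-point distribution with mass `1/2` at `1` and at `-1`:
for every bounded continuous test function `f`, the expectations
`∫ f (T n ω) ∂μ` converge to `(f 1 + f (-1)) / 2`. -/
theorem net_profit_tendsto_in_distribution_two_point
    {Ω : Type*} [MeasurableSpace Ω] (μ : Measure Ω) [IsProbabilityMeasure μ]
    (p u d : ℝ) (hp0 : 0 < p) (hp1 : p < 1)
    (hd0 : 0 < d) (hd1 : d ≤ 1) (hu : 1 ≤ u) (hne : u ≠ d)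
    (hcrit : u ^ p * d ^ (1 - p) = 1)
    (X : ℕ → Ω → ℕ) (hXmeas : ∀ n, Measurable (X n))
    (hXbin : ∀ n k : ℕ,
      μ {ω | X n ω = k} = ENNReal.ofReal ((n.choose k : ℝ) * p^k * (1 - p)^(n-k)))
    (T : ℕ → Ω → ℝ)
    (hT : ∀ n ω, T n ω =
      -1 + (∑ k ∈ Finset.range (ktilde n u d + 1),
              if X n ω = k then u^k * d^(n-k) else 0)
        + 2 * (if ktilde n u d + 1 ≤ X n ω then (1 : ℝ) else 0)) :
    ∀ f : BoundedContinuousFunction ℝ ℝ,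
      Tendsto (fun n : ℕ => ∫ ω, f (T n ω) ∂μ) atTop
        (nhds ((f 1 + f (-1)) / 2)) := by
  intro f
  have hdu : d < u := (hd1.trans hu).lt_of_ne' hne
  have hlog : 0 < Real.log (u / d) := Real.log_pos ((one_lt_div hd0).2 hdu)
  have hTX (n : ℕ) (ω : Ω) : T n ω = profitOfExcess (Real.log (u / d)) (X n ω - n * p) := by
    rw [hT, netProfit_eq_profitOfExcess hp0.le hp1.le hd0 hdu hcrit]
  have hlaw (n : ℕ) : HasLaw (X n) (binomial n ⟨p, hp0.le, hp1.le⟩) μ :=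
    hasLaw_binomial_of_measure_eq (hXmeas n) (hXbin n)
  have hlim := tendsto_integral_of_tendstoInDistribution
    (tendstoInDistribution_comp_binomial_sub_mean hp0 hp1 hlaw
      (HasLaw.id (μ := gaussianReal 0 1)) (measurable_profitOfExcess _)
      (tendsto_profitOfExcess_atTop _) (tendsto_profitOfExcess_atBot hlog)) f
  have : NullSingletonClass (gaussianReal 0 1) := nullSingletonClass_gaussianReal one_ne_zero
  have := isNegInvariant_gaussianReal_zero 1
  simp only [id, apply_ite f, integral_ite_pos_eq_midpoint, midpoint_eq_smul_add] at hlim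
  simpa only [hTX, smul_eq_mul, invOf_eq_inv, div_eq_inv_mul] using hlim
end
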